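/- (Corollary: local uniqueness for the inverse drift problem.) Fix a bounded continuous function p : closure(Ω) → ℝ and functions a₁, …, a_n ∈ C¹(closure(Ω)) such that the n×n matrix with columns ∇a₁(x), …, ∇a_n(x) is invertible for every x ∈ closure(Ω). Then there exists a graph-type subdomain D with D ⊂ Ω and 0 ∈ ∂D ∩ ∂Ω, independent of the fields H₁, H₂ below, such that: if H₁, H₂ ∈ 𝓗 and, for j = 1,2 and k = 1,…,n, u_{j,k} : closure(Ω) × [0,T] → ℝ are functions such that u_{j,k} and ∂_t u_{j,k} are C¹ on closure(Ω) × [0,T], u_{j,k} satisfies ∂_t u_{j,k} + ⟨H_j(x), ∇_x u_{j,k}⟩ + p(x) u_{j,k} = 0 on Ω × (0,T) and u_{j,k}(x,0) = a_k(x) on Ω, and if u_{1,k}(x', ℓ(x'), t) = u_{2,k}(x', ℓ(x'), t) for all |x'| < ρ₀, all t ∈ (0,T) and all k = 1,…,n, then H₁(x) = H₂(x) for every x ∈ D. -/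

import Mathlib

noncomputable section

open MeasureTheory Metric Set
open scoped RealInnerProductSpace

abbrev Esp (n : ℕ) : Type := EuclideanSpace ℝ (Fin n)

/-- The point `(x', xₙ) ∈ ℝ^{d+1} = ℝ^d × ℝ`. -/
noncomputable def graphMk (d : ℕ) (x' : Esp d) (xn : ℝ) : Esp (d+1) :=
  (EuclideanSpace.equiv (Fin (d+1)) ℝ).symm
    (Fin.snoc (⇑(EuclideanSpace.equiv (Fin d) ℝ) x') xn)

/-- `H` is `(M, δ₀)`-admissible on the compact set `K`. -/
def IsAdmissible {n : ℕ} (M δ₀ : ℝ) (K : Set (Esp n)) (H : Esp n → Esp n) : Prop :=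
  ∃ U : Set (Esp n), IsOpen U ∧ Convex ℝ U ∧ K ⊆ U ∧ ContDiffOn ℝ 1 H U ∧
    (∀ x ∈ U, ‖H x‖ ≤ M) ∧ (∀ x ∈ U, ‖fderiv ℝ H x‖ ≤ M) ∧ (∀ x ∈ K, δ₀ < ‖H x‖)

/-- `ψ_H(x) = ⟨x, H(x)⟩`. -/
noncomputable def psiW {n : ℕ} (H : Esp n → Esp n) (x : Esp n) : ℝ := ⟪x, H x⟫

/-- The Carleman weight `φ_H(x,t) = -βt + ψ_H(x)`. -/
noncomputable def phiW {n : ℕ} (β : ℝ) (H : Esp n → Esp n) (x : Esp n) (t : ℝ) : ℝ :=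
  -(β * t) + psiW H x

/-- Outward unit normal `ν₁` of the upper graph `xₙ = ℓ(x')`. -/
noncomputable def nuUp (d : ℕ) (ℓ : Esp d → ℝ) (x' : Esp d) : Esp (d+1) :=
  (Real.sqrt (1 + ‖gradient ℓ x'‖ ^ 2))⁻¹ • graphMk d (-(gradient ℓ x')) 1

/-- Outward unit normal `ν₂` of the lower graph `xₙ = m(x')`. -/
noncomputable def nuDown (d : ℕ) (m : Esp d → ℝ) (x' : Esp d) : Esp (d+1) :=
  (Real.sqrt (1 + ‖gradient m x'‖ ^ 2))⁻¹ • graphMk d (gradient m x') (-1)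

/-- Area element `ω(x') = √(1 + |∇m(x')|²)` of the graph of `m`. -/
noncomputable def omegaW (d : ℕ) (m : Esp d → ℝ) (x' : Esp d) : ℝ :=
  Real.sqrt (1 + ‖gradient m x'‖ ^ 2)

/-- The graph domain `D = {(x', xₙ) : |x'| < ρ₁, ℓ(x') − ℓ̃(x') < xₙ < ℓ(x')}`. -/
def graphDomain (d : ℕ) (ρ₁ : ℝ) (ℓ ℓt : Esp d → ℝ) : Set (Esp (d+1)) :=
  {x | ∃ x' : Esp d, ∃ xn : ℝ, ‖x'‖ < ρ₁ ∧ ℓ x' - ℓt x' < xn ∧ xn < ℓ x' ∧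
    x = graphMk d x' xn}

/-!
Transport solutions are followed along the characteristics of `H₁`, traced backwards from the graph
of `ℓ`: near `0` the height above the graph strictly increases along every admissible field, so
each point of a small graph domain leaves through the graph before time `T`, inside the strip where
the solutions are controlled. Along such a characteristic `Y` put
`w t q = u₁ (Y q) (t - q) - u₂ (Y q) (t - q)`. It vanishes at the exit point `q = 0`, its
derivative in `q` is `p w + Dₓu₂ (H₁ - H₂)`, and as `Dₓu₂` is Lipschitz in time, the increment
`w (s + h) - w s` is driven by a term of size `h ‖H₁ - H₂‖`. Dividing by `h → 0` at `q = s`, where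
the increment equals `u₁ (Y s) h - u₂ (Y s) h`, bounds `Da (H₁ - H₂)` at `Y s` by an integral of
`‖H₁ - H₂‖` over `[0, s]`. Since `Da` is injective, this Volterra inequality forces `H₁ = H₂`; here
it is solved in the weighted sup norm with weight `exp (-λ q)`, for which the bound halves when `λ`
is large.
-/

open Filter Topology NNReal

section Analysis

variable {E F : Type*} [NormedAddCommGroup E] [NormedSpace ℝ E] [NormedAddCommGroup F]
  [NormedSpace ℝ F]

lemma norm_le_mul_exp_of_norm_deriv_le {z z' : ℝ → F} {a b A B P lam : ℝ} (hA : 0 < A)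
    (hB : B < A * (lam - P)) (hz : ContinuousOn z (Icc a b)) (hza : z a = 0)
    (hz' : ∀ t ∈ Ioo a b, HasDerivAt z (z' t) t)
    (hle : ∀ t ∈ Ioo a b, ‖z' t‖ ≤ P * ‖z t‖ + B * Real.exp (lam * t)) {t : ℝ}
    (ht : t ∈ Icc a b) : ‖z t‖ ≤ A * Real.exp (lam * t) := by
  rcases ht.1.eq_or_lt with rfl | hat
  · rw [hza, norm_zero]
    positivity
  -- The comparison theorem needs a right derivative at its starting point, and `z` may have none
  -- at `a`: start slightly later.
  have hnear : ∀ᶠ s in 𝓝[>] a, ‖z s‖ < A * Real.exp (lam * s) := by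
    have hcont := (hz a ⟨le_rfl, ht.1.trans ht.2⟩).mono Ioc_subset_Icc_self
    rw [ContinuousWithinAt, nhdsWithin_Ioc_eq_nhdsGT (hat.trans_le ht.2)] at hcont
    refine hcont.norm.eventually_lt (z := A * Real.exp (lam * a)) ?_ ?_
    · exact (Continuous.tendsto (by fun_prop) a).mono_left nhdsWithin_le_nhds
    · rw [hza, norm_zero]
      positivity
  obtain ⟨s, hs, has, hst⟩ := (hnear.and (Ioo_mem_nhdsGT hat)).exists
  refine image_norm_le_of_norm_deriv_right_lt_deriv_boundary (f := z) (f' := z') (a := s) (b := t)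
    (B := fun r => A * Real.exp (lam * r)) (B' := fun r => A * (Real.exp (lam * r) * lam))
    (hz.mono (Icc_subset_Icc has.le ht.2)) (fun r hr => ?_) hs.le (fun r => ?_)
    (fun r hr hzr => ?_) ⟨hst.le, le_rfl⟩
  · exact (hz' r ⟨has.trans_le hr.1, hr.2.trans_le ht.2⟩).hasDerivWithinAt
  · exact ((hasDerivAt_const_mul lam).exp).const_mul A
  · calc ‖z' r‖ ≤ P * ‖z r‖ + B * Real.exp (lam * r) :=
          hle r ⟨has.trans_le hr.1, hr.2.trans_le ht.2⟩
      _ < P * ‖z r‖ + A * (lam - P) * Real.exp (lam * r) := by gcongr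
      _ = A * (Real.exp (lam * r) * lam) := by rw [hzr]; ring

lemma exists_norm_fderiv_le_of_contDiffOn {g : E → F} {K : Set E} (hK : IsCompact K)
    (hg : ContDiffOn ℝ 1 g K) : ∃ C : ℝ, ∀ z ∈ interior K, ‖fderiv ℝ g z‖ ≤ C := by
  -- `K` need not be a set of unique differentiability, so `fderivWithin ℝ g K` may be discontinuous
  -- at the boundary; the local derivatives provided by `ContDiffWithinAt` are bounded instead.
  suffices h : ∃ C : ℝ, ∀ z ∈ K ∩ interior K, ‖fderiv ℝ g z‖ ≤ C from
    h.imp fun C hC z hz => hC z ⟨interior_subset hz, hz⟩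
  refine hK.induction_on (p := fun S => ∃ C : ℝ, ∀ z ∈ S ∩ interior K, ‖fderiv ℝ g z‖ ≤ C)
    ⟨0, by simp⟩ (fun s t hst ⟨C, hC⟩ => ⟨C, fun z hz => hC z ⟨hst hz.1, hz.2⟩⟩) ?_ fun x hx => ?_
  · rintro s t ⟨C, hC⟩ ⟨C', hC'⟩
    refine ⟨max C C', ?_⟩
    rintro z ⟨hzs | hzt, hz⟩
    · exact (hC z ⟨hzs, hz⟩).trans (le_max_left _ _)
    · exact (hC' z ⟨hzt, hz⟩).trans (le_max_right _ _)
  · obtain ⟨v, hv, -, -, g', hg', hcont⟩ :=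
      (contDiffWithinAt_succ_iff_hasFDerivWithinAt' (n := 0) (by simp)).1
        (by simpa using hg x hx)
    rw [insert_eq_of_mem hx] at hv
    have hbound : ∀ᶠ z in 𝓝[K] x, ‖g' z‖ < ‖g' x‖ + 1 :=
      hcont.continuousWithinAt.norm.eventually_lt_const (by simp)
    refine ⟨v ∩ {z | ‖g' z‖ < ‖g' x‖ + 1}, inter_mem hv hbound, ‖g' x‖ + 1, fun z hz => ?_⟩
    rw [((hg' z hz.1.1).hasFDerivAt (mem_interior_iff_mem_nhds.1 hz.2)).fderiv]
    exact hz.1.2.le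

lemma continuousOn_fderiv_of_contDiffOn {g : E → F} {s : Set E} (hs : UniqueDiffOn ℝ s)
    (hg : ContDiffOn ℝ 1 g s) (hd : ∀ x ∈ s, DifferentiableAt ℝ g x) :
    ContinuousOn (fderiv ℝ g) s :=
  (hg.continuousOn_fderivWithin hs le_rfl).congr fun x hx =>
    ((hd x hx).fderivWithin (hs x hx)).symm

lemma continuousOn_fderiv_slice {Ω : Set E} (hΩ : IsOpen Ω) {I : Set ℝ} (hI : UniqueDiffOn ℝ I)
    {u : E → ℝ → F} (hu : ContDiffOn ℝ 1 (fun q : E × ℝ => u q.1 q.2) (Ω ×ˢ I)) {x : E}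
    (hx : x ∈ Ω) : ContinuousOn (fun t => fderiv ℝ (fun y => u y t) x) I := by
  have hcont := (hu.continuousOn_fderivWithin (hΩ.uniqueDiffOn.prod hI) le_rfl).comp
    (f := fun t => (x, t)) (by fun_prop) (fun t ht => ⟨hx, ht⟩)
  refine (hcont.clm_comp (continuousOn_const (c := ContinuousLinearMap.inl ℝ E ℝ))).congr
    fun t ht => ?_
  have hslice := (hu.differentiableOn one_ne_zero (x, t) ⟨hx, ht⟩).hasFDerivWithinAt.comp
    (f := fun y => (y, t)) (s := Ω) x (hasFDerivAt_prodMk_left x t).hasFDerivWithinAt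
    fun y hy => ⟨hy, ht⟩
  exact (hslice.hasFDerivAt (hΩ.mem_nhds hx)).fderiv

lemma norm_fderiv_sub_fderiv_le {Ω : Set E} (hΩ : IsOpen Ω) {I : Set ℝ} (hI : Convex ℝ I) {C : ℝ}
    {u : E → ℝ → F} {v : E × ℝ → F}
    (hu : ∀ x ∈ Ω, ∀ t ∈ I, DifferentiableAt ℝ (fun y => u y t) x)
    (huv : ∀ x ∈ Ω, ∀ t ∈ I, HasDerivAt (u x) (v (x, t)) t)
    (hv : ∀ x ∈ Ω, ∀ t ∈ I, DifferentiableAt ℝ v (x, t))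
    (hC : ∀ x ∈ Ω, ∀ t ∈ I, ‖fderiv ℝ v (x, t)‖ ≤ C) {x : E} (hx : x ∈ Ω) {t₁ t₂ : ℝ}
    (ht₁ : t₁ ∈ I) (ht₂ : t₂ ∈ I) :
    ‖fderiv ℝ (fun y => u y t₂) x - fderiv ℝ (fun y => u y t₁) x‖ ≤ C * |t₂ - t₁| := by
  have hC0 : 0 ≤ C := (norm_nonneg _).trans (hC x hx t₁ ht₁)
  obtain ⟨ε, hε, hball⟩ := Metric.isOpen_iff.1 hΩ x hx
  rw [← fderiv_fun_sub (hu x hx t₂ ht₂) (hu x hx t₁ ht₁)]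
  refine norm_fderiv_le_of_lip' ℝ (by positivity) ?_
  filter_upwards [Metric.ball_mem_nhds x hε] with y hy
  have hspace : ∀ t ∈ I, ‖v (y, t) - v (x, t)‖ ≤ C * ‖y - x‖ := fun t ht => by
    refine (convex_ball x ε).norm_image_sub_le_of_norm_hasFDerivWithin_le
      (f := fun w => v (w, t)) (fun w hw => HasFDerivAt.hasFDerivWithinAt <|
        (hv w (hball hw) t ht).hasFDerivAt.comp w (hasFDerivAt_prodMk_left w t))
      (fun w hw => ?_) (mem_ball_self hε) hy
    calc _ ≤ ‖fderiv ℝ v (w, t)‖ * ‖ContinuousLinearMap.inl ℝ E ℝ‖ :=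
          ContinuousLinearMap.opNorm_comp_le _ _
      _ ≤ C * 1 := by
          gcongr
          exacts [hC w (hball hw) t ht, ContinuousLinearMap.norm_inl_le_one ℝ E ℝ]
      _ = C := mul_one C
  have htime := hI.norm_image_sub_le_of_norm_hasDerivWithin_le (f := fun t => u y t - u x t)
    (fun t ht => ((huv y (hball hy) t ht).sub (huv x hx t ht)).hasDerivWithinAt) hspace ht₁ ht₂
  calc ‖u y t₂ - u y t₁ - (u x t₂ - u x t₁)‖ = ‖u y t₂ - u x t₂ - (u y t₁ - u x t₁)‖ := by
        congr 1; abel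
    _ ≤ C * ‖y - x‖ * |t₂ - t₁| := htime
    _ = C * |t₂ - t₁| * ‖y - x‖ := by ring

lemma hasDerivAt_along_curve {u : E → ℝ → F} {Y : ℝ → E} {θ : ℝ → ℝ} {Y' : E} {θ' q : ℝ}
    (hY : HasDerivAt Y Y' q) (hθ : HasDerivAt θ θ' q)
    (hu : DifferentiableAt ℝ (fun z : E × ℝ => u z.1 z.2) (Y q, θ q)) :
    HasDerivAt (fun r => u (Y r) (θ r))
      (θ' • deriv (u (Y q)) (θ q) + fderiv ℝ (fun y => u y (θ q)) (Y q) Y') q := by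
  have hspace : HasFDerivAt (fun y => u y (θ q)) _ (Y q) :=
    hu.hasFDerivAt.comp (f := fun y => (y, θ q)) (Y q) (hasFDerivAt_prodMk_left (Y q) (θ q))
  have htime : HasDerivAt (u (Y q)) _ (θ q) :=
    (hu.hasFDerivAt.comp (f := fun t => (Y q, t)) (θ q)
      (hasFDerivAt_prodMk_right (Y q) (θ q))).hasDerivAt
  have hcomp : HasDerivAt (fun r => u (Y r) (θ r)) _ q :=
    hu.hasFDerivAt.comp_hasDerivAt (f := fun r => (Y r, θ r)) q (hY.prodMk hθ)
  convert hcomp using 1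
  rw [hspace.fderiv, htime.deriv]
  simp only [ContinuousLinearMap.comp_apply, ContinuousLinearMap.inl_apply,
    ContinuousLinearMap.inr_apply, ← map_smul, ← map_add, Prod.smul_mk, Prod.mk_add_mk, smul_zero,
    smul_eq_mul, mul_one, zero_add, add_zero]

lemma exists_norm_le_mul_norm_apply_of_injective {X : Type*} [TopologicalSpace X]
    [FiniteDimensional ℝ E] {Q : Set X} (hQ : IsCompact Q) {A : X → E →L[ℝ] F}
    (hA : ContinuousOn A Q) (hinj : ∀ x ∈ Q, Function.Injective (A x)) :
    ∃ κ > 0, ∀ x ∈ Q, ∀ e, ‖e‖ ≤ κ * ‖A x e‖ := by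
  rcases (Q ×ˢ sphere (0 : E) 1).eq_empty_or_nonempty with hempty | hne
  · refine ⟨1, one_pos, fun x hx e => ?_⟩
    suffices e = 0 by simp [this]
    by_contra he
    exact eq_empty_iff_forall_notMem.1 hempty (x, ‖e‖⁻¹ • e)
      ⟨hx, by simp [norm_smul, norm_ne_zero_iff.2 he]⟩
  have hcont : ContinuousOn (fun z : X × E => ‖A z.1 z.2‖) (Q ×ˢ sphere 0 1) :=
    ((hA.comp continuousOn_fst fun z hz => hz.1).clm_apply continuousOn_snd).norm
  obtain ⟨z, hz, hmin⟩ := (hQ.prod (isCompact_sphere 0 1)).exists_isMinOn hne hcont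
  have hpos : 0 < ‖A z.1 z.2‖ := norm_pos_iff.2 fun h =>
    ne_zero_of_mem_unit_sphere ⟨z.2, hz.2⟩ (hinj z.1 hz.1 (h.trans (map_zero _).symm))
  refine ⟨‖A z.1 z.2‖⁻¹, inv_pos.2 hpos, fun x hx e => ?_⟩
  rcases eq_or_ne e 0 with rfl | he
  · simp
  have hle : ‖A z.1 z.2‖ ≤ ‖A x (‖e‖⁻¹ • e)‖ :=
    isMinOn_iff.1 hmin (x, ‖e‖⁻¹ • e) ⟨hx, by simp [norm_smul, norm_ne_zero_iff.2 he]⟩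
  rw [map_smul, norm_smul, norm_inv, norm_norm, inv_mul_eq_div, le_div_iff₀ (norm_pos_iff.2 he)]
    at hle
  rwa [inv_mul_eq_div, le_div_iff₀ hpos, mul_comm]

lemma nonpos_of_forall_le_half {X : Type*} {S : Set X} {f : X → ℝ} (hf : BddAbove (f '' S))
    (hhalf : ∀ B > 0, (∀ x ∈ S, f x ≤ B) → ∀ x ∈ S, f x ≤ B / 2) {x : X} (hx : x ∈ S) :
    f x ≤ 0 := by
  by_contra! hpos
  set B := sSup (f '' S)
  have hle : ∀ y ∈ S, f y ≤ B := fun y hy => le_csSup hf (mem_image_of_mem f hy)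
  have hB : 0 < B := hpos.trans_le (hle x hx)
  have hBhalf : B ≤ B / 2 :=
    csSup_le ⟨_, mem_image_of_mem f hx⟩ (forall_mem_image.2 (hhalf B hB hle))
  linarith

end Analysis

/-- Classical solutions `u x t` of the transport equation `∂ₜu + Dₓu·H + p u = 0` on `Ω × (0, T)`
with initial value `a`, such that `u` and `∂ₜu` are `C¹` up to the boundary. The time derivative
enters through a function `v` equal to it on `Ω × (0, T)` because `deriv (u x) t` refers to times
outside `[0, T]` when `t` is an endpoint. -/
structure IsTransportSolution {E F : Type*} [NormedAddCommGroup E] [NormedSpace ℝ E]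
    [NormedAddCommGroup F] [NormedSpace ℝ F] (Ω : Set E) (T : ℝ) (H : E → E) (p : E → ℝ)
    (a : E → F) (u : E → ℝ → F) : Prop where
  contDiffOn : ContDiffOn ℝ 1 (fun q : E × ℝ => u q.1 q.2) (closure Ω ×ˢ Icc 0 T)
  exists_timeDeriv : ∃ v : E × ℝ → F, ContDiffOn ℝ 1 v (closure Ω ×ˢ Icc 0 T) ∧
    ∀ x ∈ Ω, ∀ t ∈ Ioo 0 T, HasDerivAt (u x) (v (x, t)) t
  equation : ∀ x ∈ Ω, ∀ t ∈ Ioo 0 T,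
    deriv (u x) t + fderiv ℝ (fun y => u y t) x (H x) + p x • u x t = 0
  initial : ∀ x ∈ Ω, u x 0 = a x

namespace IsTransportSolution

variable {E F : Type*} [NormedAddCommGroup E] [NormedSpace ℝ E] [NormedAddCommGroup F]
  [NormedSpace ℝ F] {Ω : Set E} {T : ℝ} {H H₁ H₂ : E → E} {p : E → ℝ} {a : E → F}
  {u u₁ u₂ : E → ℝ → F}

lemma differentiableAt (hu : IsTransportSolution Ω T H p a u) (hΩ : IsOpen Ω) {x : E} (hx : x ∈ Ω)
    {t : ℝ} (ht : t ∈ Ioo 0 T) : DifferentiableAt ℝ (fun q : E × ℝ => u q.1 q.2) (x, t) :=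
  (hu.contDiffOn.contDiffAt <| prod_mem_nhds (mem_of_superset (hΩ.mem_nhds hx) subset_closure)
    (Icc_mem_nhds ht.1 ht.2)).differentiableAt one_ne_zero

lemma continuousOn_time (hu : IsTransportSolution Ω T H p a u) {x : E} (hx : x ∈ Ω) :
    ContinuousOn (u x) (Icc 0 T) :=
  hu.contDiffOn.continuousOn.comp (f := fun t => (x, t)) (by fun_prop)
    fun _ ht => ⟨subset_closure hx, ht⟩

lemma exists_norm_deriv_le (hu : IsTransportSolution Ω T H p a u) (hΩ : IsCompact (closure Ω)) :
    ∃ C, ∀ x ∈ Ω, ∀ t ∈ Ioo 0 T, ‖deriv (u x) t‖ ≤ C := by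
  obtain ⟨v, hv, huv⟩ := hu.exists_timeDeriv
  obtain ⟨C, hC⟩ := (hΩ.prod isCompact_Icc).exists_bound_of_continuousOn hv.continuousOn
  refine ⟨C, fun x hx t ht => ?_⟩
  rw [(huv x hx t ht).deriv]
  exact hC (x, t) ⟨subset_closure hx, Ioo_subset_Icc_self ht⟩

lemma exists_norm_fderiv_sub_fderiv_le (hu : IsTransportSolution Ω T H p a u) (hΩ : IsOpen Ω)
    (hΩc : IsCompact (closure Ω)) :
    ∃ C, 0 ≤ C ∧ ∀ x ∈ Ω, ∀ t₁ ∈ Ioo 0 T, ∀ t₂ ∈ Ioo 0 T,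
      ‖fderiv ℝ (fun y => u y t₂) x - fderiv ℝ (fun y => u y t₁) x‖ ≤ C * |t₂ - t₁| := by
  obtain ⟨v, hv, huv⟩ := hu.exists_timeDeriv
  obtain ⟨C, hC⟩ := exists_norm_fderiv_le_of_contDiffOn (hΩc.prod isCompact_Icc) hv
  have hnhds : ∀ x ∈ Ω, ∀ t ∈ Ioo 0 T, closure Ω ×ˢ Icc 0 T ∈ 𝓝 (x, t) := fun x hx t ht =>
    prod_mem_nhds (mem_of_superset (hΩ.mem_nhds hx) subset_closure) (Icc_mem_nhds ht.1 ht.2)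
  refine ⟨max C 0, le_max_right _ _, fun x hx t₁ ht₁ t₂ ht₂ => ?_⟩
  refine norm_fderiv_sub_fderiv_le hΩ (convex_Ioo 0 T) (fun y hy t ht => ?_) huv
    (fun y hy t ht => (hv.contDiffAt (hnhds y hy t ht)).differentiableAt one_ne_zero)
    (fun y hy t ht => ?_) hx ht₁ ht₂
  · exact (hu.differentiableAt hΩ hy ht).comp (f := fun z => (z, t)) y (by fun_prop)
  · exact (hC (y, t) (mem_interior_iff_mem_nhds.2 (hnhds y hy t ht))).trans (le_max_left _ _)

lemma tendsto_deriv_zero (hu : IsTransportSolution Ω T H p a u) (hΩ : IsOpen Ω) (hT : 0 < T)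
    {x : E} (hx : x ∈ Ω) :
    Tendsto (deriv (u x)) (𝓝[>] 0) (𝓝 (-fderiv ℝ a x (H x) - p x • a x)) := by
  have hfderiv : fderiv ℝ (fun y => u y 0) x = fderiv ℝ a x :=
    (eventuallyEq_of_mem (hΩ.mem_nhds hx) hu.initial).fderiv_eq
  have hgrad : ContinuousWithinAt (fun t => fderiv ℝ (fun y => u y t) x) (Icc 0 T) 0 :=
    continuousOn_fderiv_slice hΩ (uniqueDiffOn_Icc hT)
      (hu.contDiffOn.mono (prod_mono subset_closure le_rfl)) hx 0 ⟨le_rfl, hT.le⟩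
  have hlim : ContinuousWithinAt (fun t => -fderiv ℝ (fun y => u y t) x (H x) - p x • u x t)
      (Icc 0 T) 0 := (hgrad.clm_apply continuousWithinAt_const).neg.sub
    ((hu.continuousOn_time hx 0 ⟨le_rfl, hT.le⟩).const_smul (p x))
  have hlim' := hlim.mono (Ioo_subset_Icc_self (a := 0) (b := T))
  rw [ContinuousWithinAt, nhdsWithin_Ioo_eq_nhdsGT hT, hfderiv, hu.initial x hx] at hlim'
  refine hlim'.congr' ?_
  filter_upwards [Ioo_mem_nhdsGT hT] with t ht
  rw [← sub_eq_zero, ← neg_eq_zero, ← hu.equation x hx t ht]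
  abel

lemma hasDerivWithinAt_zero (hu : IsTransportSolution Ω T H p a u) (hΩ : IsOpen Ω) (hT : 0 < T)
    {x : E} (hx : x ∈ Ω) :
    HasDerivWithinAt (u x) (-fderiv ℝ a x (H x) - p x • a x) (Ici 0) 0 := by
  obtain ⟨v, -, huv⟩ := hu.exists_timeDeriv
  exact hasDerivWithinAt_Ici_of_tendsto_deriv
    (fun t ht => (huv x hx t ht).differentiableAt.differentiableWithinAt)
    ((hu.continuousOn_time hx 0 ⟨le_rfl, hT.le⟩).mono Ioo_subset_Icc_self) (Ioo_mem_nhdsGT hT)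
    (hu.tendsto_deriv_zero hΩ hT hx)

lemma exists_norm_fderiv_initial_sub_le (hu₁ : IsTransportSolution Ω T H₁ p a u₁)
    (hu₂ : IsTransportSolution Ω T H₂ p a u₂) (hΩ : IsOpen Ω) (hΩc : IsCompact (closure Ω))
    (hT : 0 < T) : ∃ C, ∀ x ∈ Ω, ‖fderiv ℝ a x (H₁ x - H₂ x)‖ ≤ C := by
  obtain ⟨C₁, hC₁⟩ := hu₁.exists_norm_deriv_le hΩc
  obtain ⟨C₂, hC₂⟩ := hu₂.exists_norm_deriv_le hΩc
  refine ⟨C₂ + C₁, fun x hx => ?_⟩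
  have hlim := ((hu₂.tendsto_deriv_zero hΩ hT hx).sub (hu₁.tendsto_deriv_zero hΩ hT hx)).norm
  rw [sub_sub_sub_cancel_right, neg_sub_neg, ← map_sub] at hlim
  refine le_of_tendsto hlim ?_
  filter_upwards [Ioo_mem_nhdsGT hT] with t ht
  exact (norm_sub_le _ _).trans (add_le_add (hC₂ x hx t ht) (hC₁ x hx t ht))

lemma norm_fderiv_initial_sub_le (hu₁ : IsTransportSolution Ω T H₁ p a u₁)
    (hu₂ : IsTransportSolution Ω T H₂ p a u₂) (hΩ : IsOpen Ω) (hT : 0 < T) {x : E} (hx : x ∈ Ω)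
    {b : ℝ} (hb : ∀ᶠ h in 𝓝[>] 0, ‖u₁ x h - u₂ x h‖ ≤ b * h) :
    ‖fderiv ℝ a x (H₁ x - H₂ x)‖ ≤ b := by
  have hderiv := ((hu₂.hasDerivWithinAt_zero hΩ hT hx).sub
    (hu₁.hasDerivWithinAt_zero hΩ hT hx)).Ioi_of_Ici
  rw [sub_sub_sub_cancel_right, neg_sub_neg, ← map_sub,
    hasDerivWithinAt_iff_tendsto_slope' self_notMem_Ioi] at hderiv
  refine le_of_tendsto hderiv.norm ?_
  filter_upwards [hb, self_mem_nhdsWithin] with h hle hpos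
  rw [slope_def_module, Pi.sub_apply, Pi.sub_apply, hu₁.initial x hx, hu₂.initial x hx, sub_self,
    sub_zero, sub_zero, norm_smul, norm_inv, Real.norm_of_nonneg hpos.le, norm_sub_rev,
    inv_mul_eq_div, div_le_iff₀ hpos]
  exact hle

end IsTransportSolution

/-- The characteristic of the drift `H` that runs inside `Ω` and leaves it after time `τ`, traced
backwards from its exit point `Y 0`. -/
structure IsExitCharacteristic {E : Type*} [NormedAddCommGroup E] [NormedSpace ℝ E] (Ω : Set E)
    (τ : ℝ) (H : E → E) (Y : ℝ → E) : Prop where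
  continuousOn : ContinuousOn Y (Icc 0 τ)
  hasDerivAt : ∀ q ∈ Ioo 0 τ, HasDerivAt Y (-H (Y q)) q
  mem : ∀ q ∈ Ioc 0 τ, Y q ∈ Ω

namespace IsExitCharacteristic

variable {E F : Type*} [NormedAddCommGroup E] [NormedSpace ℝ E] [NormedAddCommGroup F]
  [NormedSpace ℝ F] {Ω Ω' : Set E} {T τ : ℝ} {G H H₁ H₂ : E → E} {Y : ℝ → E} {p : E → ℝ}
  {a : E → F} {u u₁ u₂ : E → ℝ → F}

lemma congr (hY : IsExitCharacteristic Ω τ H Y) (hHG : EqOn H G Ω) :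
    IsExitCharacteristic Ω τ G Y where
  continuousOn := hY.continuousOn
  hasDerivAt q hq := hHG (hY.mem q (Ioo_subset_Ioc_self hq)) ▸ hY.hasDerivAt q hq
  mem := hY.mem

lemma mono (hY : IsExitCharacteristic Ω τ H Y) (hΩ : Ω ⊆ Ω') : IsExitCharacteristic Ω' τ H Y where
  continuousOn := hY.continuousOn
  hasDerivAt := hY.hasDerivAt
  mem q hq := hΩ (hY.mem q hq)

lemma mem_closure (hY : IsExitCharacteristic Ω τ H Y) {q : ℝ} (hq : q ∈ Icc 0 τ) (hτ : 0 < τ) :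
    Y q ∈ closure Ω := by
  rw [← closure_Ioc hτ.ne] at hq
  exact closure_mono (image_subset_iff.2 hY.mem)
    ((hY.continuousOn.mono (closure_Ioc hτ.ne).le).image_closure (mem_image_of_mem Y hq))

lemma hasDerivAt_solution (hY : IsExitCharacteristic Ω τ H Y)
    (hu : IsTransportSolution Ω T G p a u) (hΩ : IsOpen Ω) {q t : ℝ} (hq : q ∈ Ioo 0 τ)
    (ht : t - q ∈ Ioo 0 T) :
    HasDerivAt (fun r => u (Y r) (t - r))
      (p (Y q) • u (Y q) (t - q)
        + fderiv ℝ (fun y => u y (t - q)) (Y q) (G (Y q) - H (Y q))) q := by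
  have hmem : Y q ∈ Ω := hY.mem q (Ioo_subset_Ioc_self hq)
  refine (hasDerivAt_along_curve (hY.hasDerivAt q hq) ((hasDerivAt_id' q).const_sub t)
    (hu.differentiableAt hΩ hmem ht)).congr_deriv ?_
  rw [map_sub, map_neg, ← sub_eq_zero, neg_one_smul, ← neg_eq_zero, ← hu.equation _ hmem _ ht]
  abel

lemma continuousOn_solution (hY : IsExitCharacteristic Ω τ H Y)
    (hu : IsTransportSolution Ω T G p a u) {s t : ℝ} (hsτ : s ∈ Ioc 0 τ) (hst : s ≤ t)
    (htT : t ≤ T) : ContinuousOn (fun r => u (Y r) (t - r)) (Icc 0 s) :=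
  hu.contDiffOn.continuousOn.comp (f := fun r => (Y r, t - r))
    ((hY.continuousOn.mono (Icc_subset_Icc_right hsτ.2)).prodMk (by fun_prop)) fun r hr =>
      ⟨hY.mem_closure ⟨hr.1, hr.2.trans hsτ.2⟩ (hsτ.1.trans_le hsτ.2),
        sub_nonneg.2 (hr.2.trans hst), (sub_le_self t hr.1).trans htT⟩

lemma hasDerivAt_solution_sub (hY : IsExitCharacteristic Ω τ H₁ Y)
    (hu₁ : IsTransportSolution Ω T H₁ p a u₁) (hu₂ : IsTransportSolution Ω T H₂ p a u₂)
    (hΩ : IsOpen Ω) {q t : ℝ} (hq : q ∈ Ioo 0 τ) (ht : t - q ∈ Ioo 0 T) :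
    HasDerivAt (fun r => u₁ (Y r) (t - r) - u₂ (Y r) (t - r))
      (p (Y q) • (u₁ (Y q) (t - q) - u₂ (Y q) (t - q))
        + fderiv ℝ (fun y => u₂ y (t - q)) (Y q) (H₁ (Y q) - H₂ (Y q))) q := by
  refine ((hY.hasDerivAt_solution hu₁ hΩ hq ht).sub
    (hY.hasDerivAt_solution hu₂ hΩ hq ht)).congr_deriv ?_
  simp only [sub_self, map_zero, smul_sub, map_sub]
  abel

lemma norm_solution_sub_le (hY : IsExitCharacteristic Ω τ H₁ Y)
    (hu₁ : IsTransportSolution Ω T H₁ p a u₁) (hu₂ : IsTransportSolution Ω T H₂ p a u₂)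
    (hΩ : IsOpen Ω) (hexit : ∀ t ∈ Ioo 0 T, u₁ (Y 0) t = u₂ (Y 0) t) {P C A B lam s h : ℝ}
    (hp : ∀ x ∈ Ω, |p x| ≤ P)
    (hgrad : ∀ x ∈ Ω, ∀ t₁ ∈ Ioo 0 T, ∀ t₂ ∈ Ioo 0 T,
      ‖fderiv ℝ (fun y => u₂ y t₂) x - fderiv ℝ (fun y => u₂ y t₁) x‖ ≤ C * |t₂ - t₁|)
    (hC : 0 ≤ C) (hs : s ∈ Ioc 0 τ) (hA : 0 < A) (hAB : C * B < A * (lam - P))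
    (hB : ∀ q ∈ Ioo 0 s, ‖H₁ (Y q) - H₂ (Y q)‖ ≤ B * Real.exp (lam * q)) (hh : 0 < h)
    (hshT : s + h < T) :
    ‖u₁ (Y s) h - u₂ (Y s) h‖ ≤ A * Real.exp (lam * s) * h := by
  set w : ℝ → ℝ → F := fun t q => u₁ (Y q) (t - q) - u₂ (Y q) (t - q) with hw
  set D : ℝ → ℝ → E →L[ℝ] F := fun t q => fderiv ℝ (fun y => u₂ y (t - q)) (Y q)
  have hwcont : ∀ t, s ≤ t → t ≤ T → ContinuousOn (w t) (Icc 0 s) := fun t hst htT =>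
    (hY.continuousOn_solution hu₁ hs hst htT).sub (hY.continuousOn_solution hu₂ hs hst htT)
  have htime : ∀ q ∈ Ioo 0 s, s - q ∈ Ioo 0 T ∧ s + h - q ∈ Ioo 0 T := fun q hq =>
    ⟨⟨by linarith [hq.2], by linarith [hq.1]⟩, by linarith [hq.2], by linarith [hq.1]⟩
  have hsT : s ∈ Ioo 0 T := ⟨hs.1, by linarith⟩
  have hderiv {t q : ℝ} (hq : q ∈ Ioo 0 s) :=
    hY.hasDerivAt_solution_sub hu₁ hu₂ hΩ (t := t) ⟨hq.1, hq.2.trans_le hs.2⟩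
  have hend : w (s + h) s - w s s = u₁ (Y s) h - u₂ (Y s) h := by
    simp [hw, hu₁.initial _ (hY.mem s hs), hu₂.initial _ (hY.mem s hs)]
  have hstart : w (s + h) 0 - w s 0 = 0 := by
    simp [hw, hexit s hsT, hexit (s + h) ⟨by linarith [hs.1], hshT⟩]
  rw [← hend, mul_right_comm]
  refine norm_le_mul_exp_of_norm_deriv_le (z := fun q => w (s + h) q - w s q) (a := 0) (b := s)
    (P := P) (B := C * B * h) (by positivity) ?_
    ((hwcont (s + h) (by linarith) hshT.le).sub (hwcont s le_rfl hsT.2.le)) hstart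
    (fun q hq => (hderiv hq (htime q hq).2).sub (hderiv hq (htime q hq).1))
    (fun q hq => ?_) ⟨hs.1.le, le_rfl⟩
  · calc C * B * h < A * (lam - P) * h := by gcongr
      _ = A * h * (lam - P) := by ring
  · have hmem := hY.mem q ⟨hq.1, hq.2.le.trans hs.2⟩
    calc _ = ‖p (Y q) • (w (s + h) q - w s q)
            + (D (s + h) q - D s q) (H₁ (Y q) - H₂ (Y q))‖ := by
          rw [smul_sub _ (w (s + h) q), sub_apply, sub_add_sub_comm]
      _ ≤ |p (Y q)| * ‖w (s + h) q - w s q‖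
            + ‖D (s + h) q - D s q‖ * ‖H₁ (Y q) - H₂ (Y q)‖ := by
          refine (norm_add_le _ _).trans (add_le_add (norm_smul _ _).le ?_)
          exact ContinuousLinearMap.le_opNorm _ _
      _ ≤ P * ‖w (s + h) q - w s q‖ + C * |s + h - q - (s - q)| * (B * Real.exp (lam * q)) := by
          gcongr
          exacts [hp _ hmem, hgrad _ hmem _ (htime q hq).1 _ (htime q hq).2, hB q hq]
      _ = P * ‖w (s + h) q - w s q‖ + C * B * h * Real.exp (lam * q) := by
          rw [show s + h - q - (s - q) = h by ring, abs_of_pos hh]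
          ring

lemma norm_fderiv_initial_sub_le (hY : IsExitCharacteristic Ω τ H₁ Y)
    (hu₁ : IsTransportSolution Ω T H₁ p a u₁) (hu₂ : IsTransportSolution Ω T H₂ p a u₂)
    (hΩ : IsOpen Ω) (hτT : τ < T) (hexit : ∀ t ∈ Ioo 0 T, u₁ (Y 0) t = u₂ (Y 0) t)
    {P C A B lam s : ℝ} (hp : ∀ x ∈ Ω, |p x| ≤ P)
    (hgrad : ∀ x ∈ Ω, ∀ t₁ ∈ Ioo 0 T, ∀ t₂ ∈ Ioo 0 T,
      ‖fderiv ℝ (fun y => u₂ y t₂) x - fderiv ℝ (fun y => u₂ y t₁) x‖ ≤ C * |t₂ - t₁|)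
    (hC : 0 ≤ C) (hs : s ∈ Ioc 0 τ) (hA : 0 < A) (hAB : C * B < A * (lam - P))
    (hB : ∀ q ∈ Ioo 0 s, ‖H₁ (Y q) - H₂ (Y q)‖ ≤ B * Real.exp (lam * q)) :
    ‖fderiv ℝ a (Y s) (H₁ (Y s) - H₂ (Y s))‖ ≤ A * Real.exp (lam * s) := by
  refine hu₁.norm_fderiv_initial_sub_le hu₂ hΩ ((hs.1.trans_le hs.2).trans hτT) (hY.mem s hs) ?_
  filter_upwards [Ioo_mem_nhdsGT (sub_pos.2 (hs.2.trans_lt hτT))] with h hh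
  exact hY.norm_solution_sub_le hu₁ hu₂ hΩ hexit hp hgrad hC hs hA hAB hB hh.1
    (lt_sub_iff_add_lt'.1 hh.2)

theorem drift_eq (hY : IsExitCharacteristic Ω τ H₁ Y)
    (hu₁ : IsTransportSolution Ω T H₁ p a u₁) (hu₂ : IsTransportSolution Ω T H₂ p a u₂)
    (hΩ : IsOpen Ω) (hΩc : IsCompact (closure Ω)) (hτT : τ < T)
    (hexit : ∀ t ∈ Ioo 0 T, u₁ (Y 0) t = u₂ (Y 0) t) {P κ s : ℝ} (hp : ∀ x ∈ Ω, |p x| ≤ P)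
    (hκ : 0 < κ) (ha : ∀ q ∈ Ioc 0 τ, ∀ e, ‖e‖ ≤ κ * ‖fderiv ℝ a (Y q) e‖) (hs : s ∈ Ioc 0 τ) :
    H₁ (Y s) = H₂ (Y s) := by
  have hT : 0 < T := (hs.1.trans_le hs.2).trans hτT
  have hP : 0 ≤ P := (abs_nonneg _).trans (hp _ (hY.mem s hs))
  obtain ⟨C, hC, hgrad⟩ := hu₂.exists_norm_fderiv_sub_fderiv_le hΩ hΩc
  obtain ⟨C₀, hC₀⟩ := hu₁.exists_norm_fderiv_initial_sub_le hu₂ hΩ hΩc hT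
  set lam : ℝ := P + 2 * κ * (C + 1) with hlam
  set g : ℝ → ℝ := fun q => ‖H₁ (Y q) - H₂ (Y q)‖
  have hbdd : BddAbove ((fun q => g q * Real.exp (-(lam * q))) '' Ioc 0 τ) := by
    refine ⟨κ * C₀, forall_mem_image.2 fun q hq => ?_⟩
    have hgq : g q ≤ κ * C₀ := (ha q hq _).trans (by gcongr; exact hC₀ _ (hY.mem q hq))
    have hexp : Real.exp (-(lam * q)) ≤ 1 :=
      Real.exp_le_one_iff.2 (neg_nonpos.2 (mul_nonneg (by positivity) hq.1.le))
    exact (mul_le_of_le_one_right (norm_nonneg _) hexp).trans hgq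
  have hiff : ∀ B q, g q * Real.exp (-(lam * q)) ≤ B ↔ g q ≤ B * Real.exp (lam * q) :=
    fun B q => by rw [Real.exp_neg, ← div_eq_mul_inv, div_le_iff₀ (Real.exp_pos _)]
  have hzero := nonpos_of_forall_le_half hbdd (fun B hB hle q hq => ?_) hs
  · rw [hiff, zero_mul] at hzero
    exact sub_eq_zero.1 (norm_le_zero_iff.1 hzero)
  · simp only [hiff] at hle ⊢
    have hAB : C * B < B / (2 * κ) * (lam - P) := by
      rw [show B / (2 * κ) * (lam - P) = C * B + B by rw [hlam]; field_simp; ring]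
      linarith
    calc g q ≤ κ * ‖fderiv ℝ a (Y q) (H₁ (Y q) - H₂ (Y q))‖ := ha q hq _
      _ ≤ κ * (B / (2 * κ) * Real.exp (lam * q)) := by
          gcongr
          exact hY.norm_fderiv_initial_sub_le hu₁ hu₂ hΩ hτT hexit hp hgrad hC hq (by positivity)
            hAB fun r hr => hle r ⟨hr.1, hr.2.le.trans hq.2⟩
      _ = B / 2 * Real.exp (lam * q) := by field_simp

end IsExitCharacteristic

lemma exists_eq_zero_of_le_deriv {f f' : ℝ → ℝ} {S m : ℝ} (hf : ContinuousOn f (Icc 0 S))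
    (hf' : ∀ t ∈ Ioo 0 S, HasDerivAt f (f' t) t) (hm : 0 < m) (hle : ∀ t ∈ Ioo 0 S, m ≤ f' t)
    (hneg : f 0 < 0) (hlt : -(m * S) < f 0) :
    ∃ τ ∈ Ioo 0 S, f τ = 0 ∧ ∀ t ∈ Ico 0 τ, f t < 0 := by
  have hS : 0 < S := by
    by_contra! hS
    nlinarith
  have hgrow : ∀ s ∈ Icc 0 S, ∀ t ∈ Icc 0 S, s ≤ t → m * (t - s) ≤ f t - f s := by
    refine (convex_Icc 0 S).mul_sub_le_image_sub_of_le_deriv hf ?_ ?_ <;> rw [interior_Icc]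
    · exact fun t ht => (hf' t ht).differentiableAt.differentiableWithinAt
    · exact fun t ht => (hf' t ht).deriv ▸ hle t ht
  have hpos : 0 < f S := by
    linarith [hgrow 0 ⟨le_rfl, hS.le⟩ S ⟨hS.le, le_rfl⟩ hS.le]
  obtain ⟨τ, hτ, hτ0⟩ := intermediate_value_Ioo hS.le hf ⟨hneg, hpos⟩
  refine ⟨τ, hτ, hτ0, fun t ht => ?_⟩
  have hstep := hgrow t ⟨ht.1, ht.2.le.trans hτ.2.le⟩ τ (Ioo_subset_Icc_self hτ) ht.2.le
  have := mul_pos hm (sub_pos.2 ht.2)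
  linarith

section ExitTime

variable {E : Type*} [NormedAddCommGroup E] [NormedSpace ℝ E]

lemma exists_isExitCharacteristic_of_le_fderiv {Φ : E → ℝ} {V : Set E} {G : E → E} {X : ℝ → E}
    {S m : ℝ} (hX : ContinuousOn X (Icc 0 S)) (hX' : ∀ t ∈ Ioo 0 S, HasDerivAt X (G (X t)) t)
    (hXV : ∀ t ∈ Icc 0 S, X t ∈ V) (hΦ : ∀ y ∈ V, DifferentiableAt ℝ Φ y) (hm : 0 < m)
    (hle : ∀ y ∈ V, m ≤ fderiv ℝ Φ y (G y)) (hneg : Φ (X 0) < 0) (hlt : -(m * S) < Φ (X 0)) :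
    ∃ τ ∈ Ioo 0 S, ∃ Y : ℝ → E, IsExitCharacteristic (V ∩ {y | Φ y < 0}) τ G Y ∧ Y 0 ∈ V ∧
      Φ (Y 0) = 0 ∧ Y τ = X 0 := by
  have hcont : ContinuousOn (fun t => Φ (X t)) (Icc 0 S) := fun t ht =>
    (hΦ _ (hXV t ht)).continuousAt.comp_continuousWithinAt (hX t ht)
  obtain ⟨τ, hτ, hτ0, hτneg⟩ := exists_eq_zero_of_le_deriv hcont
    (fun t ht => (hΦ _ (hXV t (Ioo_subset_Icc_self ht))).hasFDerivAt.comp_hasDerivAt t (hX' t ht))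
    hm (fun t ht => hle _ (hXV t (Ioo_subset_Icc_self ht))) hneg hlt
  have hτS : ∀ q ∈ Icc 0 τ, τ - q ∈ Icc 0 S := fun q hq =>
    ⟨sub_nonneg.2 hq.2, (sub_le_self τ hq.1).trans hτ.2.le⟩
  refine ⟨τ, hτ, fun q => X (τ - q), ⟨hX.comp (by fun_prop) hτS, fun q hq => ?_, fun q hq => ?_⟩,
    ?_, ?_, by simp⟩
  · exact (hX' (τ - q) ⟨sub_pos.2 hq.2, (sub_lt_self τ hq.1).trans hτ.2⟩).comp_const_sub τ q
  · exact ⟨hXV _ (hτS q (Ioc_subset_Icc_self hq)),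
      hτneg _ ⟨sub_nonneg.2 hq.2, sub_lt_self τ hq.1⟩⟩
  · exact hXV _ (hτS 0 ⟨le_rfl, hτ.1.le⟩)
  · simpa using hτ0

lemma eventually_lt_fderiv_apply {Φ : E → ℝ} {x₀ : E} (hΦ : ContDiffAt ℝ 1 Φ x₀) (K : ℝ≥0)
    {M m δ : ℝ} (hm : m < δ) :
    ∀ᶠ y in 𝓝 x₀, ∀ G : E → E, LipschitzWith K G → ‖G x₀‖ ≤ M → δ < fderiv ℝ Φ x₀ (G x₀) →
      m < fderiv ℝ Φ y (G y) := by
  have hcont : ContinuousAt (fderiv ℝ Φ) x₀ := hΦ.continuousAt_fderiv one_ne_zero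
  have hlim : Tendsto (fun y => ‖fderiv ℝ Φ y - fderiv ℝ Φ x₀‖ * M
      + ‖fderiv ℝ Φ y‖ * (K * ‖y - x₀‖)) (𝓝 x₀) (𝓝 0) := by
    have : ContinuousAt (fun y => ‖fderiv ℝ Φ y - fderiv ℝ Φ x₀‖ * M
      + ‖fderiv ℝ Φ y‖ * (K * ‖y - x₀‖)) x₀ := by fun_prop
    simpa [ContinuousAt] using this
  filter_upwards [hlim.eventually_lt_const (sub_pos.2 hm)] with y hy G hG hGM hGδ
  have hsplit : fderiv ℝ Φ x₀ (G x₀) - fderiv ℝ Φ y (G y)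
      = -(fderiv ℝ Φ y - fderiv ℝ Φ x₀) (G x₀) - fderiv ℝ Φ y (G y - G x₀) := by
    rw [sub_apply, map_sub]
    ring
  have hle : fderiv ℝ Φ x₀ (G x₀) - fderiv ℝ Φ y (G y)
      ≤ ‖fderiv ℝ Φ y - fderiv ℝ Φ x₀‖ * M + ‖fderiv ℝ Φ y‖ * (K * ‖y - x₀‖) := by
    rw [hsplit]
    refine (Real.le_norm_self _).trans ((norm_sub_le _ _).trans (add_le_add ?_ ?_))
    · rw [norm_neg]
      exact (ContinuousLinearMap.le_opNorm _ _).trans (by gcongr)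
    · exact (ContinuousLinearMap.le_opNorm _ _).trans (by gcongr; exact hG.norm_sub_le y x₀)
  linarith

variable [CompleteSpace E]

lemma exists_integralCurve_mem_closedBall {G : E → E} {K : ℝ≥0} {x₀ x : E} {R L S : ℝ}
    (hG : LipschitzOnWith K G (closedBall x₀ R)) (hL : ∀ y ∈ closedBall x₀ R, ‖G y‖ ≤ L)
    (hR : 0 ≤ R) (hS : 0 ≤ S) (hx : ‖x - x₀‖ + L * S ≤ R) :
    ∃ X : ℝ → E, X 0 = x ∧ (∀ t, X t ∈ closedBall x₀ R) ∧
      ∀ t ∈ Icc 0 S, HasDerivWithinAt X (G (X t)) (Icc 0 S) t := by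
  have hL0 : 0 ≤ L := (norm_nonneg _).trans (hL x₀ (mem_closedBall_self hR))
  have h0 : (0 : ℝ) ∈ Icc 0 S := left_mem_Icc.2 hS
  have hPL : IsPicardLindelof (fun _ : ℝ => G) (⟨0, h0⟩ : Icc 0 S) x₀
      (.mk R hR) ‖x - x₀‖₊ (.mk L hL0) K := by
    refine IsPicardLindelof.of_time_independent hL hG ?_
    simp only [NNReal.coe_mk, sub_zero, sub_self, max_eq_left hS, coe_nnnorm]
    linarith
  have hxr : x ∈ closedBall x₀ ‖x - x₀‖₊ := mem_closedBall_iff_norm.2 (coe_nnnorm _).ge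
  obtain ⟨α, hα⟩ := ODE.FunSpace.exists_isFixedPt_next hPL hxr
  have hmem : ∀ t, α.compProj t ∈ closedBall x₀ R := fun t =>
    α.compProj_mem_closedBall hPL.mul_max_le
  have hα0 : α.compProj (⟨0, h0⟩ : Icc 0 S) = x := by
    rw [ODE.FunSpace.compProj_val, ← hα, ODE.FunSpace.next_apply₀]
  refine ⟨α.compProj, hα0, hmem, fun t ht => ?_⟩
  refine (ODE.hasDerivWithinAt_picard_Icc h0 hPL.continuousOn_uncurry
    α.continuous_compProj.continuousOn (fun t _ => hmem t) x ht).congr_of_mem (fun t ht => ?_) ht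
  nth_rw 1 [← hα]
  rw [ODE.FunSpace.compProj_of_mem ht, ODE.FunSpace.next_apply]

lemma eventually_exists_isExitCharacteristic {Φ : E → ℝ} {x₀ : E} {V : Set E} {T M δ : ℝ}
    (hΦ : ContDiffAt ℝ 1 Φ x₀) (hΦ0 : Φ x₀ = 0) (hV : V ∈ 𝓝 x₀) (hT : 0 < T) (hδ : 0 < δ)
    (K : ℝ≥0) :
    ∀ᶠ x in 𝓝 x₀, Φ x < 0 → ∀ G : E → E, LipschitzWith K G → ‖G x₀‖ ≤ M →
      δ < fderiv ℝ Φ x₀ (G x₀) → ∃ τ ∈ Ioo 0 T, ∃ Y : ℝ → E,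
        IsExitCharacteristic (V ∩ {y | Φ y < 0}) τ G Y ∧ Y 0 ∈ V ∧ Φ (Y 0) = 0 ∧ Y τ = x := by
  have hdiff : ∀ᶠ y in 𝓝 x₀, DifferentiableAt ℝ Φ y :=
    (hΦ.eventually (by simp)).mono fun y hy => hy.differentiableAt one_ne_zero
  obtain ⟨R, hR, hball⟩ := nhds_basis_closedBall.eventually_iff.1
    (hdiff.and ((eventually_lt_fderiv_apply hΦ K (M := M) (half_lt_self hδ)).and hV))
  set L : ℝ := |M| + K * R + 1 with hL
  have hL0 : 0 < L := by positivity
  set S : ℝ := min T (R / (2 * L))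
  have hS0 : 0 < S := lt_min hT (by positivity)
  have hLS : L * S ≤ R / 2 := by
    calc L * S ≤ L * (R / (2 * L)) := by gcongr; exact min_le_right _ _
      _ = R / 2 := by field_simp
  have hlevel : ∀ᶠ x in 𝓝 x₀, -(δ / 2 * S) < Φ x :=
    hΦ.continuousAt.eventually_const_lt (by rw [hΦ0]; exact neg_neg_of_pos (by positivity))
  filter_upwards [hlevel, closedBall_mem_nhds x₀ (half_pos hR)] with x hlt hx hneg G hG hGM hGδ
  have hGL : ∀ y ∈ closedBall x₀ R, ‖G y‖ ≤ L := fun y hy => by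
    have hstep : ‖G y - G x₀‖ ≤ K * R :=
      (hG.norm_sub_le y x₀).trans (by gcongr; exact mem_closedBall_iff_norm.1 hy)
    linarith [norm_le_norm_add_norm_sub' (G y) (G x₀), le_abs_self M, hL]
  obtain ⟨X, rfl, hXmem, hX⟩ := exists_integralCurve_mem_closedBall (hG.lipschitzOnWith (s := _))
    hGL hR.le hS0.le (by linarith [mem_closedBall_iff_norm.1 hx])
  obtain ⟨τ, hτ, Y, hY⟩ := exists_isExitCharacteristic_of_le_fderiv
    (fun t ht => (hX t ht).continuousWithinAt)
    (fun t ht => (hX t (Ioo_subset_Icc_self ht)).hasDerivAt (Icc_mem_nhds ht.1 ht.2))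
    (fun t _ => hXmem t) (fun y hy => (hball hy).1) (half_pos hδ)
    (fun y hy => ((hball hy).2.1 G hG hGM hGδ).le) hneg hlt
  have hRV : closedBall x₀ R ⊆ V := fun y hy => (hball hy).2.2
  exact ⟨τ, ⟨hτ.1, hτ.2.trans_le (min_le_left _ _)⟩, Y, hY.1.mono (inter_subset_inter_left _ hRV),
    hRV hY.2.1, hY.2.2⟩

end ExitTime

section GraphCoordinates

/-- The splitting `ℝ^d × ℝ ≃ ℝ^{d+1}` of which `graphMk` is the curried form. -/
def graphEquiv (d : ℕ) : (Esp d × ℝ) ≃L[ℝ] Esp (d + 1) :=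
  LinearEquiv.toContinuousLinearEquiv
    { toFun := fun q => graphMk d q.1 q.2
      invFun := fun x => (WithLp.toLp 2 fun i : Fin d => x i.castSucc, x (Fin.last d))
      map_add' := fun q q' => by
        ext i
        refine Fin.lastCases ?_ (fun i => ?_) i <;> simp [graphMk]
      map_smul' := fun s q => by
        ext i
        refine Fin.lastCases ?_ (fun i => ?_) i <;> simp [graphMk]
      left_inv := fun q => by
        ext i <;> simp [graphMk]
      right_inv := fun x => by
        ext i
        refine Fin.lastCases ?_ (fun i => ?_) i <;> simp [graphMk] }

/-- The height of a point above the graph of `ℓ`. -/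
def graphHeight (d : ℕ) (ℓ : Esp d → ℝ) (x : Esp (d + 1)) : ℝ :=
  ((graphEquiv d).symm x).2 - ℓ ((graphEquiv d).symm x).1

/-- The points over the ball of radius `ρ` whose height above the graph of `ℓ` lies in `I`; the
one-sided neighbourhoods of a piece of the graph are of this form. -/
def graphStrip (d : ℕ) (ℓ : Esp d → ℝ) (ρ : ℝ) (I : Set ℝ) : Set (Esp (d + 1)) :=
  {x | ‖((graphEquiv d).symm x).1‖ < ρ ∧ graphHeight d ℓ x ∈ I}

/-- The thickness functions `ℓ̃` admitted in the definition of a subdomain of graph type over the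
ball of radius `ρ`. -/
structure IsThicknessProfile (d : ℕ) (ρ : ℝ) (ℓt : Esp d → ℝ) : Prop where
  contDiffOn : ContDiffOn ℝ 2 ℓt (closedBall 0 ρ)
  pos : ∀ x, ‖x‖ < ρ → 0 < ℓt x
  eq_zero : ∀ x, ‖x‖ = ρ → ℓt x = 0 ∧ gradient ℓt x = 0

variable {d : ℕ} {ℓ ℓt : Esp d → ℝ} {ρ c : ℝ} {I : Set ℝ}

@[simp]
lemma graphEquiv_apply (q : Esp d × ℝ) : graphEquiv d q = graphMk d q.1 q.2 := rfl

@[simp]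
lemma graphEquiv_symm_graphMk (x' : Esp d) (xn : ℝ) :
    (graphEquiv d).symm (graphMk d x' xn) = (x', xn) :=
  (graphEquiv d).symm_apply_apply (x', xn)

lemma graphMk_graphEquiv_symm (x : Esp (d + 1)) :
    graphMk d ((graphEquiv d).symm x).1 ((graphEquiv d).symm x).2 = x :=
  (graphEquiv d).apply_symm_apply x

lemma graphMk_zero : graphMk d 0 0 = 0 := (graphEquiv d).map_zero

lemma inner_graphMk (x : Esp (d + 1)) (y' : Esp d) (yn : ℝ) :
    ⟪x, graphMk d y' yn⟫ = ⟪((graphEquiv d).symm x).1, y'⟫ + ((graphEquiv d).symm x).2 * yn := by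
  conv_lhs => rw [← graphMk_graphEquiv_symm x]
  simp [graphMk, PiLp.inner_apply, Fin.sum_univ_castSucc, mul_comm]

@[simp]
lemma graphHeight_graphMk (x' : Esp d) (xn : ℝ) :
    graphHeight d ℓ (graphMk d x' xn) = xn - ℓ x' := by
  simp [graphHeight]

lemma graphHeight_zero (hℓ0 : ℓ 0 = 0) : graphHeight d ℓ 0 = 0 := by simp [graphHeight, hℓ0]

lemma eq_graphMk_of_graphHeight_eq_zero {x : Esp (d + 1)} (hx : graphHeight d ℓ x = 0) :
    x = graphMk d ((graphEquiv d).symm x).1 (ℓ ((graphEquiv d).symm x).1) := by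
  rw [← sub_eq_zero.1 hx, graphMk_graphEquiv_symm]

lemma contDiffAt_graphHeight {n : WithTop ℕ∞} {x : Esp (d + 1)}
    (hℓ : ContDiffAt ℝ n ℓ ((graphEquiv d).symm x).1) : ContDiffAt ℝ n (graphHeight d ℓ) x :=
  have hsymm : ContDiffAt ℝ n (graphEquiv d).symm x := (graphEquiv d).symm.contDiff.contDiffAt
  hsymm.snd.sub (hℓ.comp x hsymm.fst)

lemma fderiv_graphHeight {x : Esp (d + 1)}
    (hℓ : DifferentiableAt ℝ ℓ ((graphEquiv d).symm x).1) (v : Esp (d + 1)) :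
    fderiv ℝ (graphHeight d ℓ) x v =
      ⟪v, graphMk d (-gradient ℓ ((graphEquiv d).symm x).1) 1⟫ := by
  have hsymm : HasFDerivAt (graphEquiv d).symm
      ((graphEquiv d).symm : Esp (d + 1) →L[ℝ] Esp d × ℝ) x := (graphEquiv d).symm.hasFDerivAt
  have hheight : HasFDerivAt (graphHeight d ℓ) _ x :=
    hsymm.snd.sub (hℓ.hasFDerivAt.comp (f := fun y => ((graphEquiv d).symm y).1) x hsymm.fst)
  rw [hheight.fderiv, inner_graphMk, inner_neg_right, real_inner_comm, inner_gradient_left]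
  simp
  ring

lemma lt_fderiv_graphHeight_of_lt_inner_nuUp (hℓ : DifferentiableAt ℝ ℓ 0) {v : Esp (d + 1)}
    {δ : ℝ} (hδ : 0 < δ) (hv : δ < ⟪v, nuUp d ℓ 0⟫) : δ < fderiv ℝ (graphHeight d ℓ) 0 v := by
  have hzero : ((graphEquiv d).symm 0).1 = 0 := by simp
  have hsqrt : 1 ≤ √(1 + ‖gradient ℓ 0‖ ^ 2) := by
    rw [Real.one_le_sqrt]
    linarith [sq_nonneg ‖gradient ℓ 0‖]
  rw [fderiv_graphHeight (by rwa [hzero]), hzero]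
  rw [nuUp, inner_smul_right, inv_mul_eq_div, lt_div_iff₀ (one_pos.trans_le hsqrt)] at hv
  exact (le_mul_of_one_le_right hδ.le hsqrt).trans_lt hv

lemma graphStrip_eq_image : graphStrip d ℓ ρ I =
    (fun q : Esp d × ℝ => graphMk d q.1 (ℓ q.1 + q.2)) '' (ball 0 ρ ×ˢ I) := by
  refine Subset.antisymm (fun x hx => ?_) ?_
  · exact ⟨(((graphEquiv d).symm x).1, graphHeight d ℓ x), ⟨mem_ball_zero_iff.2 hx.1, hx.2⟩,
      by simp only [graphHeight, add_sub_cancel, graphMk_graphEquiv_symm]⟩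
  · rintro _ ⟨⟨x', y⟩, ⟨hx', hy⟩, rfl⟩
    simpa [graphStrip] using And.intro (mem_ball_zero_iff.1 hx') hy

lemma uniqueDiffOn_graphStrip (hℓ : ∀ x ∈ ball (0 : Esp d) ρ, DifferentiableAt ℝ ℓ x)
    (hI : UniqueDiffOn ℝ I) : UniqueDiffOn ℝ (graphStrip d ℓ ρ I) := by
  rw [graphStrip_eq_image]
  refine (isOpen_ball.uniqueDiffOn.prod hI).image (f' := fun q =>
    (graphEquiv d : Esp d × ℝ →L[ℝ] Esp (d + 1)).comp
      ((ContinuousLinearMap.fst ℝ (Esp d) ℝ).prod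
        ((fderiv ℝ ℓ q.1).comp (ContinuousLinearMap.fst ℝ (Esp d) ℝ) +
          ContinuousLinearMap.snd ℝ (Esp d) ℝ))) (fun q hq => ?_) (fun q _ => ?_)
  · have hshear : HasFDerivAt (fun q : Esp d × ℝ => (q.1, ℓ q.1 + q.2)) _ q :=
      hasFDerivAt_fst.prodMk
        (((hℓ q.1 hq.1).hasFDerivAt.comp q hasFDerivAt_fst).add hasFDerivAt_snd)
    exact ((graphEquiv d).hasFDerivAt.comp q hshear).hasFDerivWithinAt
  · refine Function.Surjective.denseRange fun x =>
      ⟨(((graphEquiv d).symm x).1,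
        ((graphEquiv d).symm x).2 - fderiv ℝ ℓ q.1 ((graphEquiv d).symm x).1), ?_⟩
    simp

lemma graphStrip_closure_subset : graphStrip d ℓ ρ (closure I) ⊆ closure (graphStrip d ℓ ρ I) := by
  simp only [graphStrip_eq_image]
  rintro _ ⟨⟨x', y⟩, ⟨hx', hy⟩, rfl⟩
  have hcont : Continuous fun y : ℝ => graphMk d x' (ℓ x' + y) :=
    (graphEquiv d).continuous.comp (by fun_prop : Continuous fun y : ℝ => (x', ℓ x' + y))
  have himage : (fun y => graphMk d x' (ℓ x' + y)) '' I ⊆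
      (fun q : Esp d × ℝ => graphMk d q.1 (ℓ q.1 + q.2)) '' (ball 0 ρ ×ˢ I) := by
    rintro _ ⟨z, hz, rfl⟩
    exact ⟨(x', z), ⟨hx', hz⟩, rfl⟩
  exact closure_mono himage (image_closure_subset_closure_image hcont (mem_image_of_mem _ hy))

lemma graphStrip_mem_nhds_zero (hℓ : ContinuousAt ℓ 0) (hℓ0 : ℓ 0 = 0) (hρ : 0 < ρ)
    (hI : I ∈ 𝓝 0) : graphStrip d ℓ ρ I ∈ 𝓝 0 := by
  have hsymm : Continuous (graphEquiv d).symm := (graphEquiv d).symm.continuous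
  have hheight : ContinuousAt (graphHeight d ℓ) 0 :=
    hsymm.snd.continuousAt.sub (ContinuousAt.comp (by simpa using hℓ) hsymm.fst.continuousAt)
  exact inter_mem (hsymm.fst.norm.continuousAt.eventually_lt_const (by simpa using hρ))
    (hheight.eventually_mem (by rwa [graphHeight_zero hℓ0]))

lemma graphDomain_subset_graphStrip : graphDomain d ρ ℓ ℓt ⊆ graphStrip d ℓ ρ (Iio 0) := by
  rintro _ ⟨x', xn, hx', -, hxn, rfl⟩
  simpa [graphStrip] using And.intro hx' hxn

lemma zero_mem_closure_graphDomain (hℓ0 : ℓ 0 = 0) (hρ : 0 < ρ) (hℓt : 0 < ℓt 0) :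
    (0 : Esp (d + 1)) ∈ closure (graphDomain d ρ ℓ ℓt) := by
  have hcont : Continuous fun y : ℝ => graphMk d 0 y :=
    (graphEquiv d).continuous.comp (by fun_prop : Continuous fun y : ℝ => ((0 : Esp d), y))
  have hlim := (hcont.tendsto 0).mono_left (nhdsWithin_le_nhds (s := Iio 0))
  rw [graphMk_zero] at hlim
  refine mem_closure_of_tendsto hlim ?_
  filter_upwards [Ioo_mem_nhdsLT (neg_lt_zero.2 hℓt)] with y hy
  exact ⟨0, y, by simpa using hρ, by simpa [hℓ0] using hy.1, by simpa [hℓ0] using hy.2, rfl⟩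

lemma exists_isThicknessProfile_le {ε : ℝ} (hρ : 0 < ρ) (hε : 0 < ε) :
    ∃ ℓt : Esp d → ℝ, IsThicknessProfile d ρ ℓt ∧ ∀ x, ‖x‖ < ρ → ℓt x ≤ ε := by
  refine ⟨fun x => ε / ρ ^ 4 * (ρ ^ 2 - ‖x‖ ^ 2) ^ 2, ⟨ContDiff.contDiffOn ?_, fun x hx => ?_,
    fun x hx => ⟨by simp [hx], ?_⟩⟩, fun x hx => ?_⟩
  · exact contDiff_const.mul ((contDiff_const.sub (contDiff_norm_sq ℝ)).pow 2)
  · have hlt : 0 < ρ ^ 2 - ‖x‖ ^ 2 := sub_pos.2 (by gcongr)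
    positivity
  · have hmin : IsLocalMin (fun x : Esp d => ε / ρ ^ 4 * (ρ ^ 2 - ‖x‖ ^ 2) ^ 2) x :=
      Eventually.of_forall fun y => by
        simp only [hx, sub_self, ne_eq, OfNat.ofNat_ne_zero, not_false_eq_true, zero_pow, mul_zero]
        positivity
    rw [gradient, hmin.fderiv_eq_zero, map_zero]
  · calc ε / ρ ^ 4 * (ρ ^ 2 - ‖x‖ ^ 2) ^ 2 ≤ ε / ρ ^ 4 * (ρ ^ 2) ^ 2 := by
          have hlt : ‖x‖ ^ 2 ≤ ρ ^ 2 := by gcongr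
          gcongr
          linarith [sq_nonneg ‖x‖]
      _ = ε := by field_simp

lemma exists_graphDomain_subset {s : Set (Esp (d + 1))} {ρ₀ : ℝ} (hℓ : ContinuousAt ℓ 0)
    (hℓ0 : ℓ 0 = 0) (hs : s ∈ 𝓝 0) (hρ₀ : 0 < ρ₀) :
    ∃ ρ ∈ Ioo 0 ρ₀, ∃ ℓt, IsThicknessProfile d ρ ℓt ∧ graphDomain d ρ ℓ ℓt ⊆ s := by
  have hcont : ContinuousAt (fun q : Esp d × ℝ => graphEquiv d (q.1, ℓ q.1 + q.2)) 0 :=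
    (graphEquiv d).continuous.continuousAt.comp (continuousAt_fst.prodMk
      ((hℓ.comp (f := Prod.fst) (x := (0 : Esp d × ℝ)) continuousAt_fst).add continuousAt_snd))
  obtain ⟨ε, hε, hball⟩ := Metric.eventually_nhds_iff.1 (hcont.eventually_mem (s := s)
    (by simpa [hℓ0, graphMk_zero] using hs))
  obtain ⟨ρ, hρ, hρlt⟩ := exists_between (lt_min hε hρ₀)
  obtain ⟨ℓt, hℓt, hle⟩ := exists_isThicknessProfile_le (d := d) hρ hρ
  refine ⟨ρ, ⟨hρ, hρlt.trans_le (min_le_right _ _)⟩, ℓt, hℓt, ?_⟩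
  rintro _ ⟨x', xn, hx', hlow, hup, rfl⟩
  have hρε : ρ < ε := hρlt.trans_le (min_le_left _ _)
  have hmem := hball (y := (x', xn - ℓ x')) <| by
    have := hle x' hx'
    rw [dist_zero_right, Prod.norm_def, max_lt_iff, Real.norm_eq_abs, abs_lt]
    exact ⟨hx'.trans hρε, by linarith, by linarith⟩
  simpa using hmem

lemma exists_graphDomain_forall_exists_isExitCharacteristic {ρ₀ T M δ : ℝ}
    (hℓ : ContDiffAt ℝ 1 ℓ 0) (hℓ0 : ℓ 0 = 0) (hρ₀ : 0 < ρ₀) (hc : 0 < c) (hT : 0 < T)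
    (hδ : 0 < δ) (K : ℝ≥0) :
    ∃ ρ ∈ Ioo 0 ρ₀, ∃ ℓt, IsThicknessProfile d ρ ℓt ∧
      graphDomain d ρ ℓ ℓt ⊆ graphStrip d ℓ ρ₀ (Ioo (-c) 0) ∧
      ∀ G, LipschitzWith K G → ‖G 0‖ ≤ M → δ < ⟪G 0, nuUp d ℓ 0⟫ → ∀ x ∈ graphDomain d ρ ℓ ℓt,
        ∃ τ ∈ Ioo 0 T, ∃ Y, IsExitCharacteristic (graphStrip d ℓ ρ₀ (Ioo (-c) 0)) τ G Y ∧
          (∃ x', ‖x'‖ < ρ₀ ∧ Y 0 = graphMk d x' (ℓ x')) ∧ Y τ = x := by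
  have hV : graphStrip d ℓ ρ₀ (Ioi (-c)) ∈ 𝓝 0 :=
    graphStrip_mem_nhds_zero hℓ.continuousAt hℓ0 hρ₀ (Ioi_mem_nhds (neg_lt_zero.2 hc))
  have hexit := eventually_exists_isExitCharacteristic (M := M)
    (contDiffAt_graphHeight (x := 0) (by simpa using hℓ)) (graphHeight_zero hℓ0) hV hT hδ K
  obtain ⟨ρ, hρ, ℓt, hℓt, hsub⟩ := exists_graphDomain_subset hℓ.continuousAt hℓ0
    (inter_mem hexit hV) hρ₀
  have hneg : ∀ x ∈ graphDomain d ρ ℓ ℓt, graphHeight d ℓ x < 0 := fun x hx =>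
    (graphDomain_subset_graphStrip hx).2
  refine ⟨ρ, hρ, ℓt, hℓt, fun x hx => ⟨(hsub hx).2.1, (hsub hx).2.2, hneg x hx⟩,
    fun G hG hGM hGδ x hx => ?_⟩
  obtain ⟨τ, hτ, Y, hY, hYV, hY0, hYτ⟩ := (hsub hx).1 (hneg x hx) G hG hGM
    (lt_fderiv_graphHeight_of_lt_inner_nuUp (hℓ.differentiableAt one_ne_zero) hδ hGδ)
  exact ⟨τ, hτ, Y, hY.mono fun y hy => ⟨hy.1.1, hy.1.2, hy.2⟩,
    ⟨_, hYV.1, eq_graphMk_of_graphHeight_eq_zero hY0⟩, hYτ⟩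

end GraphCoordinates

section GradientForm

variable {n : ℕ}

lemma differentiableAt_of_det_gradient_ne_zero {a : Fin n → Esp n → ℝ} {x : Esp n}
    (h : (Matrix.of fun (i k : Fin n) => gradient (a k) x i).det ≠ 0) (k : Fin n) :
    DifferentiableAt ℝ (a k) x := by
  by_contra hk
  refine h (Matrix.det_eq_zero_of_column_eq_zero k fun i => ?_)
  simp [gradient_eq_zero_of_not_differentiableAt hk]

lemma fderiv_injective_of_det_gradient_ne_zero {a : Fin n → Esp n → ℝ} {x : Esp n}
    (h : (Matrix.of fun (i k : Fin n) => gradient (a k) x i).det ≠ 0) :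
    Function.Injective (fderiv ℝ (fun y k => a k y) x) := by
  refine (injective_iff_map_eq_zero _).2 fun e he => ?_
  rw [fderiv_pi fun k => differentiableAt_of_det_gradient_ne_zero h k] at he
  have hvec := Matrix.eq_zero_of_vecMul_eq_zero h (v := fun i => e i) <| by
    ext k
    have hk : fderiv ℝ (a k) x e = 0 := congrFun he k
    rw [← inner_gradient_left, PiLp.inner_apply] at hk
    simpa [Matrix.vecMul, dotProduct] using hk
  ext i
  exact congrFun hvec i

lemma isTransportSolution_of_gradient {Ω : Set (Esp n)} (hΩ : IsOpen Ω) {T : ℝ}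
    {H : Esp n → Esp n} {p a : Esp n → ℝ} {u : Esp n → ℝ → ℝ}
    (hu : ContDiffOn ℝ 1 (fun q : Esp n × ℝ => u q.1 q.2) (closure Ω ×ˢ Icc 0 T))
    (hut : ContDiffOn ℝ 1 (fun q : Esp n × ℝ => deriv (u q.1) q.2) (closure Ω ×ˢ Icc 0 T))
    (heq : ∀ x ∈ Ω, ∀ t ∈ Ioo 0 T,
      deriv (u x) t + ⟪H x, gradient (fun z => u z t) x⟫ + p x * u x t = 0)
    (hini : ∀ x ∈ Ω, u x 0 = a x) : IsTransportSolution Ω T H p a u where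
  contDiffOn := hu
  exists_timeDeriv := ⟨_, hut, fun x hx t ht => by
    have hd : DifferentiableAt ℝ (fun q : Esp n × ℝ => u q.1 q.2) (x, t) :=
      (hu.contDiffAt <| prod_mem_nhds (mem_of_superset (hΩ.mem_nhds hx) subset_closure)
        (Icc_mem_nhds ht.1 ht.2)).differentiableAt one_ne_zero
    exact (hd.comp (f := fun s => (x, s)) t (by fun_prop)).hasDerivAt⟩
  equation x hx t ht := by
    rw [← inner_gradient_left, real_inner_comm]
    exact heq x hx t ht
  initial := hini

lemma IsTransportSolution.pi {E ι : Type*} [NormedAddCommGroup E] [NormedSpace ℝ E] [Fintype ι]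
    {Ω : Set E} {T : ℝ} {H : E → E} {p : E → ℝ} {a : ι → E → ℝ} {u : ι → E → ℝ → ℝ}
    (hu : ∀ k, IsTransportSolution Ω T H p (a k) (u k)) (hΩ : IsOpen Ω) :
    IsTransportSolution Ω T H p (fun x k => a k x) (fun x t k => u k x t) where
  contDiffOn := contDiffOn_pi.2 fun k => (hu k).contDiffOn
  exists_timeDeriv := by
    choose v hv huv using fun k => (hu k).exists_timeDeriv
    exact ⟨fun q k => v k q, contDiffOn_pi.2 hv, fun x hx t ht =>
      hasDerivAt_pi.2 fun k => huv k x hx t ht⟩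
  equation x hx t ht := by
    have hd := fun k => (hu k).differentiableAt hΩ hx ht
    have htime : ∀ k, DifferentiableAt ℝ (u k x) t := fun k =>
      (hd k).comp (f := fun s => (x, s)) t (by fun_prop)
    have hspace : ∀ k, DifferentiableAt ℝ (fun y => u k y t) x := fun k =>
      (hd k).comp (f := fun y => (y, t)) x (by fun_prop)
    rw [deriv_pi htime, fderiv_pi hspace]
    ext k
    exact (hu k).equation x hx t ht
  initial x hx := funext fun k => (hu k).initial x hx

lemma IsAdmissible.lipschitzOnWith {M δ : ℝ} {K : Set (Esp n)} {H : Esp n → Esp n}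
    (hH : IsAdmissible M δ K H) : LipschitzOnWith M.toNNReal H K := by
  obtain ⟨U, hUo, hUc, hKU, hHU, -, hDH, -⟩ := hH
  exact (hUc.lipschitzOnWith_of_nnnorm_fderiv_le
    (fun x hx => (hHU.contDiffAt (hUo.mem_nhds hx)).differentiableAt one_ne_zero)
    (fun x hx => NNReal.coe_le_coe.1 ((hDH x hx).trans (Real.le_coe_toNNReal M)))).mono hKU

lemma IsAdmissible.norm_le {M δ : ℝ} {K : Set (Esp n)} {H : Esp n → Esp n}
    (hH : IsAdmissible M δ K H) {x : Esp n} (hx : x ∈ K) : ‖H x‖ ≤ M := by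
  obtain ⟨U, -, -, hKU, -, hHM, -⟩ := hH
  exact hHM x (hKU hx)

end GradientForm

section LocalUniqueness

variable {d : ℕ} {F : Type*} [NormedAddCommGroup F] [NormedSpace ℝ F]

lemma exists_norm_le_mul_norm_fderiv_along_curve {ρ c τ : ℝ} {ℓ : Esp d → ℝ}
    {a : Esp (d + 1) → F} {Y : ℝ → Esp (d + 1)} (hc : 0 < c)
    (hℓ : ∀ x ∈ ball (0 : Esp d) ρ, DifferentiableAt ℝ ℓ x)
    (ha : ContDiffOn ℝ 1 a (graphStrip d ℓ ρ (Icc (-c) 0)))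
    (hinj : ∀ x ∈ graphStrip d ℓ ρ (Icc (-c) 0), Function.Injective (fderiv ℝ a x))
    (hY : ContinuousOn Y (Icc 0 τ)) (hYmem : MapsTo Y (Icc 0 τ) (graphStrip d ℓ ρ (Icc (-c) 0))) :
    ∃ κ > 0, ∀ q ∈ Icc 0 τ, ∀ e, ‖e‖ ≤ κ * ‖fderiv ℝ a (Y q) e‖ := by
  have hs : UniqueDiffOn ℝ (graphStrip d ℓ ρ (Icc (-c) 0)) :=
    uniqueDiffOn_graphStrip hℓ (uniqueDiffOn_Icc (neg_lt_zero.2 hc))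
  have hcont := continuousOn_fderiv_of_contDiffOn hs ha fun x hx =>
    differentiableAt_of_fderiv_injective (hinj x hx)
  exact exists_norm_le_mul_norm_apply_of_injective isCompact_Icc (hcont.comp hY hYmem)
    fun q hq => hinj _ (hYmem hq)

lemma IsExitCharacteristic.drift_eq_of_graphStrip {T ρ c τ P : ℝ} {ℓ : Esp d → ℝ}
    {Ω : Set (Esp (d + 1))} {p : Esp (d + 1) → ℝ} {a : Esp (d + 1) → F}
    {H₁ H₂ : Esp (d + 1) → Esp (d + 1)} {u₁ u₂ : Esp (d + 1) → ℝ → F} {Y : ℝ → Esp (d + 1)}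
    {x₀ : Esp d}
    (hY : IsExitCharacteristic (graphStrip d ℓ ρ (Ioo (-c) 0)) τ H₁ Y)
    (hx₀ : ‖x₀‖ < ρ) (hY0 : Y 0 = graphMk d x₀ (ℓ x₀)) (hτ : τ ∈ Ioo 0 T) (hc : 0 < c)
    (hℓ : ∀ x ∈ ball (0 : Esp d) ρ, DifferentiableAt ℝ ℓ x) (hΩ : IsOpen Ω)
    (hΩb : Bornology.IsBounded Ω) (hΩsub : graphStrip d ℓ ρ (Ioo (-c) 0) ⊆ Ω)
    (hp : ∀ x ∈ Ω, |p x| ≤ P) (ha : ContDiffOn ℝ 1 a (closure Ω))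
    (hinj : ∀ x ∈ closure Ω, Function.Injective (fderiv ℝ a x))
    (hu₁ : IsTransportSolution Ω T H₁ p a u₁) (hu₂ : IsTransportSolution Ω T H₂ p a u₂)
    (hagree : ∀ t ∈ Ioo 0 T, u₁ (graphMk d x₀ (ℓ x₀)) t = u₂ (graphMk d x₀ (ℓ x₀)) t) :
    H₁ (Y τ) = H₂ (Y τ) := by
  have hstrip : graphStrip d ℓ ρ (Icc (-c) 0) ⊆ closure Ω := by
    rw [← closure_Ioo (neg_lt_zero.2 hc).ne]
    exact graphStrip_closure_subset.trans (closure_mono hΩsub)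
  have hYmem : MapsTo Y (Icc 0 τ) (graphStrip d ℓ ρ (Icc (-c) 0)) := fun q hq => by
    rcases hq.1.eq_or_lt with rfl | hq0
    · simpa [graphStrip, hY0] using And.intro hx₀ hc.le
    · exact ⟨(hY.mem q ⟨hq0, hq.2⟩).1, Ioo_subset_Icc_self (hY.mem q ⟨hq0, hq.2⟩).2⟩
  obtain ⟨κ, hκ, hnd⟩ := exists_norm_le_mul_norm_fderiv_along_curve hc hℓ (ha.mono hstrip)
    (fun x hx => hinj x (hstrip hx)) hY.continuousOn hYmem
  exact (hY.mono hΩsub).drift_eq hu₁ hu₂ hΩ hΩb.isCompact_closure hτ.2 (hY0 ▸ hagree) hp hκ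
    (fun q hq => hnd q (Ioc_subset_Icc_self hq)) ⟨hτ.1, le_rfl⟩

theorem corollary_local_uniqueness_inverse_drift_general {T ρ₀ M δ c : ℝ} (hT : 0 < T)
    (hρ₀ : 0 < ρ₀) (hδ : 0 < δ) (hc : 0 < c) (K : ℝ≥0) {ℓ : Esp d → ℝ}
    (hℓ : ContDiffOn ℝ 1 ℓ (ball 0 ρ₀)) (hℓ0 : ℓ 0 = 0) {Ω : Set (Esp (d + 1))} (hΩ : IsOpen Ω)
    (hΩb : Bornology.IsBounded Ω) (hΩsub : graphStrip d ℓ ρ₀ (Ioo (-c) 0) ⊆ Ω) (h0 : 0 ∉ Ω)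
    {p : Esp (d + 1) → ℝ} (hp : ∃ P, ∀ x ∈ Ω, |p x| ≤ P) {a : Esp (d + 1) → F}
    (ha : ContDiffOn ℝ 1 a (closure Ω))
    (hinj : ∀ x ∈ closure Ω, Function.Injective (fderiv ℝ a x)) :
    ∃ ρ₁ ∈ Ioo 0 ρ₀, ∃ ℓt, IsThicknessProfile d ρ₁ ℓt ∧ graphDomain d ρ₁ ℓ ℓt ⊆ Ω ∧
      (0 : Esp (d + 1)) ∈ frontier (graphDomain d ρ₁ ℓ ℓt) ∩ frontier Ω ∧
      ∀ (H₁ H₂ : Esp (d + 1) → Esp (d + 1)) (u₁ u₂ : Esp (d + 1) → ℝ → F),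
        LipschitzOnWith K H₁ (closure Ω) → ‖H₁ 0‖ ≤ M → δ < ⟪H₁ 0, nuUp d ℓ 0⟫ →
        IsTransportSolution Ω T H₁ p a u₁ → IsTransportSolution Ω T H₂ p a u₂ →
        (∀ x', ‖x'‖ < ρ₀ → ∀ t ∈ Ioo 0 T,
          u₁ (graphMk d x' (ℓ x')) t = u₂ (graphMk d x' (ℓ x')) t) →
        ∀ x ∈ graphDomain d ρ₁ ℓ ℓt, H₁ x = H₂ x := by
  have hℓat : ∀ x ∈ ball (0 : Esp d) ρ₀, ContDiffAt ℝ 1 ℓ x := fun x hx =>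
    hℓ.contDiffAt (isOpen_ball.mem_nhds hx)
  obtain ⟨ρ₁, hρ₁, ℓt, hℓt, hD, hexit⟩ := exists_graphDomain_forall_exists_isExitCharacteristic
    (M := M) (hℓat 0 (mem_ball_self hρ₀)) hℓ0 hρ₀ hc hT hδ
    (lipschitzExtensionConstant (Esp (d + 1)) * K)
  have hDΩ := hD.trans hΩsub
  have h0D := zero_mem_closure_graphDomain hℓ0 hρ₁.1 (hℓt.pos 0 (by simpa using hρ₁.1))
  have h0Ω : (0 : Esp (d + 1)) ∈ closure Ω := closure_mono hDΩ h0D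
  refine ⟨ρ₁, hρ₁, ℓt, hℓt, hDΩ, ⟨⟨h0D, fun h => h0 (hDΩ (interior_subset h))⟩,
    h0Ω, fun h => h0 (interior_subset h)⟩, ?_⟩
  intro H₁ H₂ u₁ u₂ hH₁ hM hδH hu₁ hu₂ hagree x hx
  obtain ⟨G, hG, hHG⟩ := hH₁.extend_finite_dimension
  obtain ⟨τ, hτ, Y, hY, ⟨x', hx', hY0⟩, rfl⟩ := hexit G hG (hHG h0Ω ▸ hM) (hHG h0Ω ▸ hδH) x hx
  have hY₁ := hY.congr fun y hy => (hHG (subset_closure (hΩsub hy))).symm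
  obtain ⟨P, hP⟩ := hp
  exact hY₁.drift_eq_of_graphStrip hx' hY0 hτ hc
    (fun y hy => (hℓat y hy).differentiableAt one_ne_zero) hΩ hΩb hΩsub hP ha hinj hu₁ hu₂
    (hagree x' hx')

end LocalUniqueness

/-- **Corollary** (local uniqueness for the inverse drift problem). -/
theorem corollary_local_uniqueness_inverse_drift
    (d : ℕ) (hd : 1 ≤ d) (T ρ₀ M δ₀ c : ℝ)
    (hT : 0 < T) (hρ₀ : 0 < ρ₀) (hM : 0 < M) (hδ₀ : 0 < δ₀) (hc : 0 < c)
    (ℓ : Esp d → ℝ) (hℓ : ContDiffOn ℝ 2 ℓ (closedBall 0 ρ₀)) (hℓ0 : ℓ 0 = 0)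
    (Ω : Set (Esp (d+1))) (hΩo : IsOpen Ω) (hΩb : Bornology.IsBounded Ω)
    (hΩsub : ∀ (x' : Esp d) (xn : ℝ), ‖x'‖ < ρ₀ → ℓ x' - c < xn → xn < ℓ x' →
      graphMk d x' xn ∈ Ω)
    (hΩdis : ∀ (x' : Esp d) (xn : ℝ), ‖x'‖ < ρ₀ → ℓ x' ≤ xn → xn < ℓ x' + c →
      graphMk d x' xn ∉ Ω)
    (p : Esp (d+1) → ℝ) (hp : ContinuousOn p (closure Ω))
    (hpb : ∃ Cp : ℝ, ∀ x ∈ closure Ω, |p x| ≤ Cp)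
    (a : Fin (d+1) → Esp (d+1) → ℝ)
    (ha : ∀ k, ContDiffOn ℝ 1 (a k) (closure Ω))
    (hdet : ∀ x ∈ closure Ω,
      (Matrix.of fun (i k : Fin (d+1)) => gradient (a k) x i).det ≠ 0) :
    ∃ ρ₁ ∈ Set.Ioo 0 ρ₀, ∃ ℓt : Esp d → ℝ,
      ContDiffOn ℝ 2 ℓt (closedBall 0 ρ₁) ∧
      (∀ x' : Esp d, ‖x'‖ < ρ₁ → 0 < ℓt x') ∧
      (∀ x' : Esp d, ‖x'‖ = ρ₁ → ℓt x' = 0 ∧ gradient ℓt x' = 0) ∧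
      graphDomain d ρ₁ ℓ ℓt ⊆ Ω ∧
      (0 : Esp (d+1)) ∈ frontier (graphDomain d ρ₁ ℓ ℓt) ∩ frontier Ω ∧
      ∀ H₁ H₂ : Esp (d+1) → Esp (d+1),
        IsAdmissible M δ₀ (closure Ω) H₁ → δ₀ < ⟪H₁ 0, nuUp d ℓ 0⟫ →
        IsAdmissible M δ₀ (closure Ω) H₂ → δ₀ < ⟪H₂ 0, nuUp d ℓ 0⟫ →
        ∀ u₁ u₂ : Fin (d+1) → Esp (d+1) → ℝ → ℝ,
        (∀ k : Fin (d+1),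
          ContDiffOn ℝ 1 (fun q : Esp (d+1) × ℝ => u₁ k q.1 q.2) (closure Ω ×ˢ Icc 0 T) ∧
            ContDiffOn ℝ 1 (fun q : Esp (d+1) × ℝ => deriv (u₁ k q.1) q.2)
              (closure Ω ×ˢ Icc 0 T) ∧
            (∀ x ∈ Ω, ∀ t ∈ Ioo 0 T,
              deriv (u₁ k x) t + ⟪H₁ x, gradient (fun z => u₁ k z t) x⟫
                + p x * u₁ k x t = 0) ∧
            (∀ x ∈ Ω, u₁ k x 0 = a k x)) →
        (∀ k : Fin (d+1),
          ContDiffOn ℝ 1 (fun q : Esp (d+1) × ℝ => u₂ k q.1 q.2) (closure Ω ×ˢ Icc 0 T) ∧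
            ContDiffOn ℝ 1 (fun q : Esp (d+1) × ℝ => deriv (u₂ k q.1) q.2)
              (closure Ω ×ˢ Icc 0 T) ∧
            (∀ x ∈ Ω, ∀ t ∈ Ioo 0 T,
              deriv (u₂ k x) t + ⟪H₂ x, gradient (fun z => u₂ k z t) x⟫
                + p x * u₂ k x t = 0) ∧
            (∀ x ∈ Ω, u₂ k x 0 = a k x)) →
        (∀ k : Fin (d+1), ∀ x' : Esp d, ‖x'‖ < ρ₀ → ∀ t ∈ Ioo (0:ℝ) T,
          u₁ k (graphMk d x' (ℓ x')) t = u₂ k (graphMk d x' (ℓ x')) t) →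
        ∀ x ∈ graphDomain d ρ₁ ℓ ℓt, H₁ x = H₂ x := by
  have hstrip : graphStrip d ℓ ρ₀ (Ioo (-c) 0) ⊆ Ω := fun x hx => by
    rw [← graphMk_graphEquiv_symm x]
    exact hΩsub _ _ hx.1 (sub_lt_iff_lt_add.2 (neg_lt_sub_iff_lt_add'.1 hx.2.1))
      (sub_neg.1 hx.2.2)
  have h0 : 0 ∉ Ω := graphMk_zero (d := d) ▸ hΩdis 0 0 (by simpa using hρ₀) hℓ0.le (by simpa [hℓ0])
  obtain ⟨ρ₁, hρ₁, ℓt, hℓt, hDΩ, h0D, hunique⟩ :=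
    corollary_local_uniqueness_inverse_drift_general (M := M) hT hρ₀ hδ₀ hc M.toNNReal
      ((hℓ.mono ball_subset_closedBall).of_le one_le_two) hℓ0 hΩo hΩb hstrip h0
      (hpb.imp fun _ h x hx => h x (subset_closure hx)) (contDiffOn_pi.2 ha)
      fun x hx => fderiv_injective_of_det_gradient_ne_zero (hdet x hx)
  refine ⟨ρ₁, hρ₁, ℓt, hℓt.contDiffOn, hℓt.pos, hℓt.eq_zero, hDΩ, h0D, ?_⟩
  intro H₁ H₂ hH₁ hδH₁ _ _ u₁ u₂ hu₁ hu₂ hagree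
  exact hunique H₁ H₂ (fun x t k => u₁ k x t) (fun x t k => u₂ k x t) hH₁.lipschitzOnWith
    (hH₁.norm_le (frontier_subset_closure h0D.2)) hδH₁
    (.pi (fun k => isTransportSolution_of_gradient hΩo (hu₁ k).1 (hu₁ k).2.1 (hu₁ k).2.2.1
      (hu₁ k).2.2.2) hΩo)
    (.pi (fun k => isTransportSolution_of_gradient hΩo (hu₂ k).1 (hu₂ k).2.1 (hu₂ k).2.2.1
      (hu₂ k).2.2.2) hΩo)
    fun x' hx' t ht => funext fun k => hagree k x' hx' t ht
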